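/- Let d₁, d₂ be positive integers with d₁d₂ ≥ 2, N = d₁d₂, and let U be Haar-distributed on U(N). With ρ₀, ρ₁ the partial traces over the second factor of the projectors onto the 0-th and 1-st columns of U, one has E[Tr(ρ₀²) · Tr(ρ₀ρ₁)] = (d₂²−1)·(d₁(d₁+d₂)(d₁d₂+4)+2) / ((d₁d₂−1)(d₁d₂+1)(d₁d₂+2)(d₁d₂+3)). -/

import Mathlib

/-! Write `T = Tr ρ₀²`. Summing `Tr (ρ₀ ρ_i)` over all columns gives `d₂`, because the column
projectors add up to the identity (`sum_overlap`). Haar measure is right invariant, so permuting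
the columns shows that all columns `i ≠ 0` contribute equally (`integral_overlap_swap`), whence
`(N - 1) E[T Tr(ρ₀ρ₁)] = d₂ E[T] - E[T²]` (`overlap_relation`). Only moments of a single column
`ψ`, a uniform point of the sphere, remain.

These come from integration by parts. Left invariance under `exp (tA)` with `A` skew-Hermitian
says that infinitesimal rotations of a polynomial in `ψ, ψ̄` integrate to zero
(`integral_deriv_skew`). Taking `A` supported on two coordinates separates holomorphic and
antiholomorphic derivatives (`expect_rotate`), and contracting with the constraint `|ψ| = 1`
yields the Wick-type rule `(N + p) E[ψ_v G] = E[∂G/∂ψ̄_v]` for `G` homogeneous of degree `p` in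
`ψ` (`expect_wick`, `expect_contraction`). Applied to `Tr ρ²`, `Tr ρ³` and `(Tr ρ²)²` it gives

* `(N + 1) E[T] = d₁ + d₂`,
* `(N + 2) E[Tr ρ³] = (d₁ + d₂) E[T] + 1`,
* `(N + 3) E[T²] = (d₁ + d₂) E[T] + 2 E[Tr ρ³]`,

and the formula is the solution of this linear system. -/

open Matrix MeasureTheory

instance matrixMeasurableSpace {m n α : Type*} [MeasurableSpace α] :
    MeasurableSpace (Matrix m n α) :=
  inferInstanceAs (MeasurableSpace (m → n → α))

/-- For a unitary matrix `U` of size `d₁d₂` and a column index `i`, `rho U i` is the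
partial trace over the second tensor factor of the rank-one projector onto the `i`-th
column of `U`: `(rho U i) a b = ∑ k, U_{(a,k),i} * conj (U_{(b,k),i})`. -/
noncomputable def rho {d₁ d₂ : ℕ} (U : Matrix.unitaryGroup (Fin (d₁ * d₂)) ℂ)
    (i : Fin (d₁ * d₂)) : Matrix (Fin d₁) (Fin d₁) ℂ :=
  Matrix.of fun a b => ∑ k : Fin d₂,
    (U : Matrix (Fin (d₁ * d₂)) (Fin (d₁ * d₂)) ℂ) (finProdFinEquiv (a, k)) i *
      (starRingEnd ℂ) ((U : Matrix (Fin (d₁ * d₂)) (Fin (d₁ * d₂)) ℂ) (finProdFinEquiv (b, k)) i)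

/-! ### Topology and invariance on the unitary group -/

section setup
variable {n : ℕ}

/-- Matrix entries are bounded and the defining equations closed. -/
theorem compactU : CompactSpace (Matrix.unitaryGroup (Fin n) ℂ) := by
  have h : IsCompact ((Matrix.unitaryGroup (Fin n) ℂ : Submonoid (Matrix (Fin n) (Fin n) ℂ)) :
      Set (Matrix (Fin n) (Fin n) ℂ)) := by
    have hK : IsCompact (Set.univ.pi fun _ : Fin n => Set.univ.pi fun _ : Fin n =>
        Metric.closedBall (0 : ℂ) 1) :=
      isCompact_univ_pi fun _ => isCompact_univ_pi fun _ => isCompact_closedBall _ _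
    refine IsCompact.of_isClosed_subset hK ?_ ?_
    · have : ((Matrix.unitaryGroup (Fin n) ℂ : Submonoid (Matrix (Fin n) (Fin n) ℂ)) :
          Set (Matrix (Fin n) (Fin n) ℂ)) = {A | A * star A = 1} := by
        ext A; exact Matrix.mem_unitaryGroup_iff
      rw [this]
      exact isClosed_eq (by fun_prop) continuous_const
    · intro A hA i _ j _
      simpa using entry_norm_bound_of_unitary hA i j
  exact isCompact_iff_compactSpace.mp h

theorem borelU : BorelSpace (Matrix.unitaryGroup (Fin n) ℂ) := by
  have : BorelSpace (Matrix (Fin n) (Fin n) ℂ) :=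
    inferInstanceAs (BorelSpace (Fin n → Fin n → ℂ))
  exact inferInstanceAs (BorelSpace (Subtype _))

/-- Uniqueness of Haar probability on a compact group: a right translate of `μ` is again a Haar
probability measure, hence equals `μ`. -/
theorem rightU (μ : Measure (Matrix.unitaryGroup (Fin n) ℂ)) [μ.IsHaarMeasure]
    [IsProbabilityMeasure μ] :
    μ.IsMulRightInvariant := by
  have := compactU (n := n)
  have := borelU (n := n)
  refine ⟨fun g => ?_⟩
  have : IsProbabilityMeasure (μ.map (· * g)) :=
    Measure.isProbabilityMeasure_map (by fun_prop)
  exact Measure.isHaarMeasure_eq_of_isProbabilityMeasure _ _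

end setup

/-! ### Integration by parts along one-parameter subgroups -/

section ibp
variable {n : ℕ}

/-- The real point `(ψ, ψ̄)` attached to a vector `ψ`. -/
noncomputable def pt (ψ : Fin n → ℂ) : Fin n ⊕ Fin n → ℂ :=
  Sum.elim ψ fun x => (starRingEnd ℂ) (ψ x)

theorem continuous_eval (i : Fin n) (p : MvPolynomial (Fin n ⊕ Fin n) ℂ) :
    Continuous fun U : Matrix.unitaryGroup (Fin n) ℂ =>
      MvPolynomial.eval (pt fun x => U.1 x i) p := by
  have h : Continuous fun U : Matrix.unitaryGroup (Fin n) ℂ => pt fun x => U.1 x i := by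
    refine continuous_pi fun s => ?_
    have h1 : ∀ x, Continuous fun U : Matrix.unitaryGroup (Fin n) ℂ => U.1 x i := fun x =>
      Continuous.matrix_elem continuous_subtype_val x i
    rcases s with x | x
    · exact h1 x
    · exact Complex.continuous_conj.comp (h1 x)
  exact (MvPolynomial.continuous_eval p).comp h

theorem integrable_of_continuous {E : Type*} [NormedAddCommGroup E]
    (μ : Measure (Matrix.unitaryGroup (Fin n) ℂ)) [IsProbabilityMeasure μ]
    {f : Matrix.unitaryGroup (Fin n) ℂ → E} (hf : Continuous f) : Integrable f μ := by
  have := compactU (n := n)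
  have := borelU (n := n)
  exact (hf.integrable_of_hasCompactSupport (HasCompactSupport.of_compactSpace f))

/-- The chain rule for a polynomial evaluated along a curve. -/
theorem hasDerivAt_eval {σ : Type*} [Fintype σ] (p : MvPolynomial σ ℂ) (z : ℝ → σ → ℂ) (z' : σ → ℂ)
    (t : ℝ) (hz : ∀ s, HasDerivAt (fun t => z t s) (z' s) t) :
    HasDerivAt (fun t => MvPolynomial.eval (z t) p)
      (∑ s, MvPolynomial.eval (z t) (MvPolynomial.pderiv s p) * z' s) t := by
  classical
  induction p using MvPolynomial.induction_on with
  | C a => simpa using hasDerivAt_const t a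
  | add p q hp hq =>
    simpa [add_mul, Finset.sum_add_distrib] using hp.fun_add hq
  | mul_X p s hp =>
    have := hp.fun_mul (hz s)
    simp only [MvPolynomial.eval_mul, MvPolynomial.eval_X, Derivation.leibniz, smul_eq_mul,
      MvPolynomial.pderiv_X, map_add, add_mul, Finset.sum_add_distrib]
    refine this.congr_deriv ?_
    rw [add_comm]
    congr 1
    · rw [Finset.sum_eq_single s]
      · simp
      · intro b _ hb
        simp [hb.symm]
      · simp
    · rw [Finset.sum_mul]
      exact Finset.sum_congr rfl fun _ _ => by ring

theorem exp_mem {A : Matrix (Fin n) (Fin n) ℂ} (hA : Aᴴ = -A) (t : ℝ) :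
    NormedSpace.exp (t • A) ∈ Matrix.unitaryGroup (Fin n) ℂ := by
  rw [Matrix.mem_unitaryGroup_iff, Matrix.star_eq_conjTranspose, ← Matrix.exp_conjTranspose]
  have h : (t • A)ᴴ = -(t • A) := by
    rw [Matrix.conjTranspose_smul, hA]; simp
  rw [h, ← Matrix.exp_add_of_commute _ _ (Commute.refl (t • A)).neg_right]
  simp

open scoped Matrix.Norms.Operator in
theorem hasDerivAt_exp_entry (A : Matrix (Fin n) (Fin n) ℂ) (t : ℝ) (i j : Fin n) :
    HasDerivAt (fun t : ℝ => NormedSpace.exp (t • A) i j) ((A * NormedSpace.exp (t • A)) i j) t :=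
  ((Matrix.entryLinearMap ℝ ℂ i j).toContinuousLinearMap.hasFDerivAt).comp_hasDerivAt t
    (hasDerivAt_exp_smul_const' A t)

theorem hasDerivAt_orbit (A M : Matrix (Fin n) (Fin n) ℂ) (t : ℝ) (i j : Fin n) :
    HasDerivAt (fun t : ℝ => (NormedSpace.exp (t • A) * M) i j)
      ((A * (NormedSpace.exp (t • A) * M)) i j) t := by
  rw [← Matrix.mul_assoc]
  simp only [Matrix.mul_apply (N := M)]
  exact HasDerivAt.fun_sum fun k _ => (hasDerivAt_exp_entry A t i k).mul_const _

/-- The infinitesimal form of left invariance: `U ↦ p (U e_i, conj (U e_i))` has constant integral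
along `exp (tA) U`, so its derivative along `A` integrates to zero. -/
theorem integral_deriv_skew (μ : Measure (Matrix.unitaryGroup (Fin n) ℂ))
    [μ.IsHaarMeasure] [IsProbabilityMeasure μ] (i : Fin n) (p : MvPolynomial (Fin n ⊕ Fin n) ℂ)
    {A : Matrix (Fin n) (Fin n) ℂ} (hA : Aᴴ = -A) :
    ∫ U, ∑ s, MvPolynomial.eval (pt fun x => U.1 x i) (MvPolynomial.pderiv s p) *
      pt (fun x => (A * U.1) x i) s ∂μ = 0 := by
  have := compactU (n := n)
  have := borelU (n := n)
  set f : Matrix.unitaryGroup (Fin n) ℂ → ℂ := fun U =>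
    MvPolynomial.eval (pt fun x => U.1 x i) p with hf
  set f' : Matrix.unitaryGroup (Fin n) ℂ → ℂ := fun U =>
    ∑ s, MvPolynomial.eval (pt fun x => U.1 x i) (MvPolynomial.pderiv s p) *
      pt (fun x => (A * U.1) x i) s with hf'
  have hfc : Continuous f := continuous_eval i p
  have hf'c : Continuous f' := by
    refine continuous_finsetSum _ fun s _ => (continuous_eval i _).mul ?_
    have h1 : ∀ x, Continuous fun U : Matrix.unitaryGroup (Fin n) ℂ => (A * U.1) x i := fun x =>
      Continuous.matrix_elem (continuous_const.mul continuous_subtype_val) x i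
    rcases s with x | x
    · exact h1 x
    · exact Complex.continuous_conj.comp (h1 x)
  let g : ℝ → Matrix.unitaryGroup (Fin n) ℂ := fun t => ⟨_, exp_mem hA t⟩
  obtain ⟨B, hB⟩ : ∃ B, ∀ U, ‖f' U‖ ≤ B := by
    obtain ⟨B, hB⟩ := isCompact_univ.exists_bound_of_continuousOn hf'c.continuousOn
    exact ⟨B, fun U => hB U trivial⟩
  have hder : ∀ U t, HasDerivAt (fun t => f (g t * U)) (f' (g t * U)) t := by
    intro U t
    refine hasDerivAt_eval p (fun t => pt fun x => (g t * U).1 x i) _ t fun s => ?_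
    rcases s with x | x
    · exact hasDerivAt_orbit A U.1 t x i
    · exact (Complex.conjCLE.toContinuousLinearMap.hasFDerivAt).comp_hasDerivAt t
        (hasDerivAt_orbit A U.1 t x i)
  have hmul : ∀ t, Continuous fun U => g t * U := fun t => continuous_const.mul continuous_id
  have key := (hasDerivAt_integral_of_dominated_loc_of_deriv_le (μ := μ) (x₀ := (0 : ℝ))
    (F := fun t U => f (g t * U)) (F' := fun t U => f' (g t * U)) (bound := fun _ => B)
    Filter.univ_mem
    (Filter.Eventually.of_forall fun t =>
      (integrable_of_continuous μ (hfc.comp (hmul t))).aestronglyMeasurable)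
    (integrable_of_continuous μ (hfc.comp (hmul 0)))
    (integrable_of_continuous μ (hf'c.comp (hmul 0))).aestronglyMeasurable
    (Filter.Eventually.of_forall fun U t _ => hB _)
    (integrable_const B)
    (Filter.Eventually.of_forall fun U t _ => hder U t)).2
  -- left invariance: the integral along the orbit is constant
  simp only [integral_mul_left_eq_self (μ := μ) f] at key
  rw [integral_mul_left_eq_self (μ := μ) f'] at key
  exact key.unique (hasDerivAt_const _ _)

end ibp

/-! ### The Wick recursion for one column -/

section recursion
variable {n : ℕ}
open MvPolynomial

/-- Expectation of a polynomial in the entries of column `i` and their conjugates. -/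
noncomputable def expect (μ : Measure (Matrix.unitaryGroup (Fin n) ℂ)) (i : Fin n)
    (p : MvPolynomial (Fin n ⊕ Fin n) ℂ) : ℂ :=
  ∫ U, MvPolynomial.eval (pt fun x => U.1 x i) p ∂μ

variable (μ : Measure (Matrix.unitaryGroup (Fin n) ℂ)) (i : Fin n)

theorem expect_C_mul (c : ℂ) (p : MvPolynomial (Fin n ⊕ Fin n) ℂ) :
    expect μ i (C c * p) = c * expect μ i p := by
  simp only [expect, eval_mul, eval_C]
  exact integral_const_mul _ _

/-- The column has norm one, so the expectation only sees polynomials modulo `∑ ψ_x ψ̄_x = 1`. -/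
theorem expect_congr {p q : MvPolynomial (Fin n ⊕ Fin n) ℂ}
    (h : ∀ z : Fin n ⊕ Fin n → ℂ, ∑ x, z (.inl x) * z (.inr x) = 1 → eval z p = eval z q) :
    expect μ i p = expect μ i q := by
  refine integral_congr_ae (Filter.Eventually.of_forall fun U => h _ ?_)
  have hU := congrFun (congrFun (Matrix.UnitaryGroup.star_mul_self U) i) i
  simpa [Matrix.mul_apply, pt, mul_comm] using hU

variable [IsProbabilityMeasure μ]

theorem integrable_eval (p : MvPolynomial (Fin n ⊕ Fin n) ℂ) :
    Integrable (fun U : Matrix.unitaryGroup (Fin n) ℂ => eval (pt fun x => U.1 x i) p) μ :=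
  integrable_of_continuous μ (continuous_eval i p)

theorem expect_add (p q : MvPolynomial (Fin n ⊕ Fin n) ℂ) :
    expect μ i (p + q) = expect μ i p + expect μ i q := by
  simp only [expect, map_add]
  exact integral_add (integrable_eval μ i p) (integrable_eval μ i q)

theorem expect_sum {ι : Type*} (s : Finset ι) (p : ι → MvPolynomial (Fin n ⊕ Fin n) ℂ) :
    expect μ i (∑ k ∈ s, p k) = ∑ k ∈ s, expect μ i (p k) := by
  simp only [expect, map_sum]
  exact integral_finsetSum _ fun k _ => integrable_eval μ i (p k)

variable [μ.IsHaarMeasure]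

theorem expect_skew (p : MvPolynomial (Fin n ⊕ Fin n) ℂ) (A : Matrix (Fin n) (Fin n) ℂ)
    (hA : Aᴴ = -A) :
    ∑ u, ∑ v, A u v * expect μ i (pderiv (.inl u) p * X (.inl v)) +
      ∑ u, ∑ v, (starRingEnd ℂ) (A u v) * expect μ i (pderiv (.inr u) p * X (.inr v)) = 0 := by
  rw [← integral_deriv_skew μ i p hA]
  simp only [← expect_C_mul, ← expect_sum, ← expect_add]
  refine integral_congr_ae (Filter.Eventually.of_forall fun U => ?_)
  simp only [map_add, map_sum, eval_C, eval_X, Fintype.sum_sum_type, pt, Sum.elim_inl,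
    Sum.elim_inr, Matrix.mul_apply, map_mul, Finset.mul_sum]
  congr 1 <;> exact Finset.sum_congr rfl fun _ _ => Finset.sum_congr rfl fun _ _ => by ring

theorem sum_single (u v : Fin n) (z : ℂ) (F : Fin n → Fin n → ℂ) :
    ∑ x, ∑ y, Matrix.single u v z x y * F x y = z * F u v := by
  simp [Matrix.single_apply, ite_and]

theorem conj_single (u v x y : Fin n) (z : ℂ) :
    (starRingEnd ℂ) (Matrix.single u v z x y) = Matrix.single u v ((starRingEnd ℂ) z) x y := by
  simp only [Matrix.single_apply]
  split_ifs <;> simp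

/-- The skew relation for `A = z E_uv - z̄ E_vu`; comparing `z = 1` with `z = i` isolates the part
linear in `z`. -/
theorem expect_rotate (p : MvPolynomial (Fin n ⊕ Fin n) ℂ) (u v : Fin n) :
    expect μ i (pderiv (.inl u) p * X (.inl v)) = expect μ i (pderiv (.inr v) p * X (.inr u)) := by
  have key : ∀ z : ℂ,
      z * expect μ i (pderiv (.inl u) p * X (.inl v))
      - (starRingEnd ℂ) z * expect μ i (pderiv (.inl v) p * X (.inl u))
      + ((starRingEnd ℂ) z * expect μ i (pderiv (.inr u) p * X (.inr v))
      - z * expect μ i (pderiv (.inr v) p * X (.inr u))) = 0 := by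
    intro z
    have := expect_skew μ i p (Matrix.single u v z - Matrix.single v u ((starRingEnd ℂ) z)) (by
      simp [Matrix.conjTranspose_sub])
    rw [← this]
    simp only [Matrix.sub_apply, map_sub, conj_single, sub_mul, Finset.sum_sub_distrib, sum_single,
      Complex.conj_conj]
  have h1 := key 1
  have h2 := key Complex.I
  simp only [map_one, Complex.conj_I] at h1 h2
  have h3 : (2 * Complex.I) * (expect μ i (pderiv (.inl u) p * X (.inl v))
      - expect μ i (pderiv (.inr v) p * X (.inr u))) = 0 := by
    linear_combination Complex.I * h1 + h2
  have h4 : (2 * Complex.I) ≠ 0 := by simp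
  exact sub_eq_zero.mp ((mul_eq_zero.mp h3).resolve_left h4)

/-- Integration by parts on the sphere. For `p = ψ_u G` in `expect_rotate`, summing over `u`
produces the dimension and the Euler operator on the left, while `∑ ψ_u ψ̄_u = 1` removes the sum
on the right. -/
theorem expect_wick (G : MvPolynomial (Fin n ⊕ Fin n) ℂ) (v : Fin n) :
    n * expect μ i (X (.inl v) * G) +
      expect μ i (X (.inl v) * ∑ u, X (.inl u) * pderiv (.inl u) G) =
      expect μ i (pderiv (.inr v) G) := by
  have h : expect μ i (∑ u, pderiv (.inl u) (X (.inl u) * G) * X (.inl v)) =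
      expect μ i (∑ u, pderiv (.inr v) (X (.inl u) * G) * X (.inr u)) := by
    rw [expect_sum, expect_sum]
    refine Finset.sum_congr rfl fun u _ => ?_
    have := expect_rotate μ i (X (.inl u) * G) u v
    exact this
  calc _ = expect μ i (∑ u, pderiv (.inl u) (X (.inl u) * G) * X (.inl v)) := by
        rw [← expect_C_mul μ i (n : ℂ), ← expect_add μ i]
        congr 1
        simp only [Derivation.leibniz, smul_eq_mul, pderiv_X_self, mul_one]
        rw [← Finset.sum_mul, Finset.sum_add_distrib, Finset.sum_const, Finset.card_univ,
          Fintype.card_fin, nsmul_eq_mul, map_natCast]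
        ring
    _ = expect μ i (∑ u, pderiv (.inr v) (X (.inl u) * G) * X (.inr u)) := by
      rw [h]
    _ = _ := by
      refine expect_congr μ i fun z hz => ?_
      have hp : ∀ u, pderiv (.inr v) (X (.inl u) * G) = X (.inl u) * pderiv (.inr v) G := fun u => by
        rw [pderiv_mul, pderiv_X_of_ne Sum.inl_ne_inr, zero_mul, zero_add]
      simp only [hp, map_sum, eval_mul, eval_X]
      generalize eval z (pderiv (.inr v) G) = w
      calc _ = (∑ x, z (.inl x) * z (.inr x)) * w := by
            rw [Finset.sum_mul]
            exact Finset.sum_congr rfl fun _ _ => by ring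
        _ = w := by rw [hz, one_mul]

end recursion

/-! ### Calculus of the trace polynomials -/

section contraction
open MvPolynomial
variable {d₁ d₂ : ℕ}

/-- Polynomials in the coordinates `ψ` (left summand) and `ψ̄` (right summand). -/
abbrev CoordPoly (d₁ d₂ : ℕ) := MvPolynomial (Fin (d₁ * d₂) ⊕ Fin (d₁ * d₂)) ℂ

/-- The coordinate `ψ_{(a,k)}`. -/
noncomputable def psi (a : Fin d₁) (k : Fin d₂) : CoordPoly d₁ d₂ :=
  X (.inl (finProdFinEquiv (a, k)))

/-- The conjugate coordinate `ψ̄_{(a,k)}`. -/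
noncomputable def chi (a : Fin d₁) (k : Fin d₂) : CoordPoly d₁ d₂ :=
  X (.inr (finProdFinEquiv (a, k)))

/-- The entries of the reduced matrix `ρ`, as polynomials. -/
noncomputable def rhoP (a b : Fin d₁) : CoordPoly d₁ d₂ := ∑ k, psi a k * chi b k

/-- The purity `Tr ρ²`. -/
noncomputable def tr2 : CoordPoly d₁ d₂ := ∑ a, ∑ b, rhoP a b * rhoP b a

/-- The third moment `Tr ρ³`. -/
noncomputable def tr3 : CoordPoly d₁ d₂ := ∑ a, ∑ b, ∑ c, rhoP a b * rhoP b c * rhoP c a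

/-- The coefficient of `ψ_{(a,k)}` in `Tr ρ²`. -/
noncomputable def coef2 (a : Fin d₁) (k : Fin d₂) : CoordPoly d₁ d₂ := ∑ b, chi b k * rhoP b a

/-- The coefficient of `ψ_{(a,k)}` in `Tr ρ³`. -/
noncomputable def coef3 (a : Fin d₁) (k : Fin d₂) : CoordPoly d₁ d₂ :=
  ∑ b, chi b k * ∑ c, rhoP b c * rhoP c a

/-- The derivation `∂/∂ψ̄_{(a,k)}`. -/
noncomputable def dchi (a : Fin d₁) (k : Fin d₂) :
    Derivation ℂ (CoordPoly d₁ d₂) (CoordPoly d₁ d₂) :=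
  pderiv (.inr (finProdFinEquiv (a, k)))

/-- The Euler derivation in the holomorphic variables, `∑ ψ_u ∂/∂ψ_u`. -/
noncomputable def eul : Derivation ℂ (CoordPoly d₁ d₂) (CoordPoly d₁ d₂) :=
  ∑ u, (X (.inl u) : CoordPoly d₁ d₂) • pderiv (.inl u)

theorem eul_apply (G : CoordPoly d₁ d₂) : eul G = ∑ u, X (.inl u) * pderiv (.inl u) G := by
  rw [eul, ← Derivation.coeFnAddMonoidHom_apply, map_sum, Finset.sum_apply]
  rfl

theorem eul_psi (a : Fin d₁) (k : Fin d₂) : eul (psi a k) = psi a k := by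
  classical
  rw [eul_apply, psi, Finset.sum_eq_single (finProdFinEquiv (a, k))]
  · rw [pderiv_X_self, mul_one]
  · intro b _ hb
    rw [pderiv_X_of_ne, mul_zero]
    exact fun h => hb (Sum.inl_injective h).symm
  · simp

theorem eul_chi (a : Fin d₁) (k : Fin d₂) : eul (chi a k) = 0 := by
  rw [eul_apply]
  refine Finset.sum_eq_zero fun u _ => ?_
  rw [chi, pderiv_X_of_ne Sum.inr_ne_inl, mul_zero]

theorem eul_rhoP (a b : Fin d₁) : eul (rhoP a b : CoordPoly d₁ d₂) = rhoP a b := by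
  simp only [rhoP, map_sum, Derivation.leibniz, eul_psi, eul_chi, smul_eq_mul, mul_zero, zero_add]
  exact Finset.sum_congr rfl fun _ _ => by ring

theorem eul_tr2 : eul (tr2 : CoordPoly d₁ d₂) = 2 * tr2 := by
  simp only [tr2, map_sum, Derivation.leibniz, eul_rhoP, smul_eq_mul, Finset.mul_sum]
  exact Finset.sum_congr rfl fun _ _ => Finset.sum_congr rfl fun _ _ => by ring

theorem eul_coef2 (a : Fin d₁) (k : Fin d₂) : eul (coef2 a k) = 1 * coef2 a k := by
  simp only [coef2, map_sum, Derivation.leibniz, eul_rhoP, eul_chi, smul_eq_mul, mul_zero,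
    add_zero, one_mul]

theorem eul_coef3 (a : Fin d₁) (k : Fin d₂) : eul (coef3 a k) = 2 * coef3 a k := by
  simp only [coef3, map_sum, Derivation.leibniz, eul_rhoP, eul_chi, smul_eq_mul, mul_zero,
    add_zero, Finset.mul_sum]
  exact Finset.sum_congr rfl fun _ _ => Finset.sum_congr rfl fun _ _ => by ring

theorem eul_coef2_tr2 (a : Fin d₁) (k : Fin d₂) :
    eul (coef2 a k * tr2) = 3 * (coef2 a k * tr2) := by
  rw [Derivation.leibniz, eul_coef2, eul_tr2, smul_eq_mul, smul_eq_mul]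
  ring

theorem dchi_psi (a b : Fin d₁) (k l : Fin d₂) : dchi a k (psi b l) = 0 :=
  pderiv_X_of_ne Sum.inl_ne_inr

theorem dchi_chi (a b : Fin d₁) (k l : Fin d₂) :
    dchi a k (chi b l) = if a = b then (if k = l then 1 else 0) else 0 := by
  classical
  rw [dchi, chi, pderiv_X, Pi.single_apply]
  simp only [Sum.inr.injEq, EmbeddingLike.apply_eq_iff_eq, Prod.mk.injEq, ← ite_and]
  congr 1
  simp only [eq_comm]

theorem dchi_rhoP (a b c : Fin d₁) (k : Fin d₂) :
    dchi a k (rhoP b c) = if a = c then psi b k else 0 := by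
  simp only [rhoP, map_sum, Derivation.leibniz, dchi_psi, dchi_chi, smul_eq_mul, mul_zero,
    add_zero]
  split_ifs <;> simp

theorem dchi_tr2 (a : Fin d₁) (k : Fin d₂) :
    dchi a k tr2 = 2 * ∑ b, psi b k * rhoP a b := by
  simp only [tr2, map_sum, Derivation.leibniz, dchi_rhoP, smul_eq_mul, mul_ite, mul_zero,
    Finset.sum_add_distrib, Finset.sum_ite_eq, Finset.mem_univ, if_true]
  rw [Finset.sum_comm]
  simp only [Finset.sum_ite_eq, Finset.mem_univ, if_true]
  rw [two_mul]
  congr 1 <;> exact Finset.sum_congr rfl fun _ _ => by ring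

/-- Contracting the index of the second tensor factor turns `ψ ψ̄` into an entry of `ρ`. -/
theorem sum_psi_chi (a : Fin d₁) (Q : Fin d₁ → CoordPoly d₁ d₂) :
    ∑ k, psi a k * ∑ b, chi b k * Q b = ∑ b, rhoP a b * Q b := by
  simp only [rhoP, Finset.mul_sum, Finset.sum_mul, mul_assoc]
  exact Finset.sum_comm

theorem sum_coef2 : (∑ a, ∑ k, psi a k * coef2 a k : CoordPoly d₁ d₂) = tr2 :=
  Finset.sum_congr rfl fun a _ => sum_psi_chi a _

theorem sum_coef3 : (∑ a, ∑ k, psi a k * coef3 a k : CoordPoly d₁ d₂) = tr3 := by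
  refine Finset.sum_congr rfl fun a _ => ?_
  simp only [coef3, sum_psi_chi, mul_assoc, ← Finset.mul_sum]

/-- The derivative of the entry `(ρ²)_{ba}`, one term for each factor. -/
theorem dchi_rhoP_sq (a b : Fin d₁) (k : Fin d₂) :
    dchi a k (∑ c, rhoP b c * rhoP c a) =
      psi b k * rhoP a a + ∑ c, psi c k * rhoP b c := by
  simp only [map_sum, Derivation.leibniz, dchi_rhoP, smul_eq_mul, mul_ite, mul_zero, if_true,
    Finset.sum_add_distrib, Finset.sum_ite_eq, Finset.mem_univ]
  rw [add_comm]
  congr 1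
  · ring
  · exact Finset.sum_congr rfl fun _ _ => by ring

theorem sum_chi_psi (b c : Fin d₁) (Q : CoordPoly d₁ d₂) :
    ∑ k, chi b k * (psi c k * Q) = rhoP c b * Q := by
  rw [rhoP, Finset.sum_mul]
  exact Finset.sum_congr rfl fun _ _ => by ring

theorem div_coef2 : (∑ a, ∑ k, dchi a k (coef2 a k) : CoordPoly d₁ d₂) =
    (d₁ + d₂ : CoordPoly d₁ d₂) * ∑ a, rhoP a a := by
  simp only [coef2, map_sum, Derivation.leibniz, dchi_rhoP, dchi_chi, smul_eq_mul, if_true,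
    mul_ite, mul_one, mul_zero, Finset.sum_add_distrib, Finset.sum_ite_eq, Finset.mem_univ]
  simp only [Finset.sum_const, Finset.card_univ, Fintype.card_fin, nsmul_eq_mul, add_mul]
  congr 1
  · rw [Finset.sum_comm]
    simp only [rhoP]
    congr 1
    exact Finset.sum_congr rfl fun _ _ => Finset.sum_congr rfl fun _ _ => by ring
  · rw [Finset.mul_sum]

theorem div_coef3 : (∑ a, ∑ k, dchi a k (coef3 a k) : CoordPoly d₁ d₂) =
    (d₁ + d₂ : CoordPoly d₁ d₂) * tr2 + (∑ a, rhoP a a) ^ 2 := by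
  have h : ∀ a : Fin d₁, (∑ k, dchi a k (coef3 a k) : CoordPoly d₁ d₂) =
      (d₂ : CoordPoly d₁ d₂) * (∑ c, rhoP a c * rhoP c a) + (∑ b, rhoP b b) * rhoP a a + tr2 := by
    intro a
    simp only [coef3, map_sum (dchi a _) (fun b => chi b _ * _), Derivation.leibniz, smul_eq_mul,
      dchi_rhoP_sq, dchi_chi, if_true, mul_ite, mul_one, mul_zero, Finset.sum_add_distrib,
      Finset.sum_ite_eq, Finset.mem_univ, mul_add, Finset.sum_const, Finset.card_univ,
      Fintype.card_fin, nsmul_eq_mul]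
    have h1 : (∑ k, ∑ b, chi b k * (psi b k * rhoP a a) : CoordPoly d₁ d₂) =
        (∑ b, rhoP b b) * rhoP a a := by
      rw [Finset.sum_comm, Finset.sum_mul]
      exact Finset.sum_congr rfl fun b _ => sum_chi_psi b b _
    have h2 : (∑ k, ∑ b, chi b k * ∑ c, psi c k * rhoP b c : CoordPoly d₁ d₂) = tr2 := by
      rw [Finset.sum_comm, tr2]
      refine Finset.sum_congr rfl fun b _ => ?_
      simp only [Finset.mul_sum]
      rw [Finset.sum_comm]
      refine Finset.sum_congr rfl fun c _ => ?_
      rw [sum_chi_psi, mul_comm]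
    rw [h1, h2]
    ring
  simp only [h, Finset.sum_add_distrib, ← Finset.mul_sum, Finset.sum_const, Finset.card_univ,
    Fintype.card_fin, nsmul_eq_mul]
  rw [← tr2]
  ring

theorem div_coef2_tr2 : (∑ a, ∑ k, dchi a k (coef2 a k * tr2) : CoordPoly d₁ d₂) =
    (d₁ + d₂ : CoordPoly d₁ d₂) * (∑ a, rhoP a a) * tr2 + 2 * tr3 := by
  have h : ∀ a : Fin d₁, (∑ k, coef2 a k * ∑ c, psi c k * rhoP a c : CoordPoly d₁ d₂) =
      ∑ c, ∑ b, rhoP a c * rhoP c b * rhoP b a := by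
    intro a
    simp only [coef2, Finset.mul_sum, Finset.sum_mul]
    rw [Finset.sum_comm]
    refine Finset.sum_congr rfl fun c _ => ?_
    rw [Finset.sum_comm]
    refine Finset.sum_congr rfl fun b _ => ?_
    calc _ = ∑ k, chi b k * (psi c k * (rhoP a c * rhoP b a)) :=
          Finset.sum_congr rfl fun _ _ => by ring
      _ = _ := by rw [sum_chi_psi]; ring
  simp only [Derivation.leibniz, Finset.sum_add_distrib, smul_eq_mul, dchi_tr2]
  rw [← div_coef2, add_comm]
  congr 1
  · simp only [Finset.sum_mul]
    exact Finset.sum_congr rfl fun _ _ => Finset.sum_congr rfl fun _ _ => mul_comm _ _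
  · simp only [mul_left_comm _ (2 : CoordPoly d₁ d₂), ← Finset.mul_sum]
    congr 1
    exact Finset.sum_congr rfl fun a _ => h a

end contraction

/-! ### Moments of the purity -/

section moments
open MvPolynomial
variable {d₁ d₂ : ℕ} (μ : Measure (Matrix.unitaryGroup (Fin (d₁ * d₂)) ℂ))
  [μ.IsHaarMeasure] [IsProbabilityMeasure μ] (i : Fin (d₁ * d₂))

/-- The Wick rule in contracted form, for a family `G` homogeneous of degree `p` in `ψ`. -/
theorem expect_contraction (G : Fin d₁ → Fin d₂ → CoordPoly d₁ d₂) (p : ℕ)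
    (hG : ∀ a k, eul (G a k) = (p : CoordPoly d₁ d₂) * G a k) :
    ((d₁ : ℂ) * d₂ + p) * expect μ i (∑ a, ∑ k, psi a k * G a k) =
      expect μ i (∑ a, ∑ k, dchi a k (G a k)) := by
  simp only [expect_sum, Finset.mul_sum]
  refine Finset.sum_congr rfl fun a _ => Finset.sum_congr rfl fun k _ => ?_
  have h := expect_wick μ i (G a k) (finProdFinEquiv (a, k))
  rw [← eul_apply, hG, ← map_natCast (C : ℂ →+* CoordPoly d₁ d₂), mul_left_comm,
    expect_C_mul μ i (p : ℂ), ← add_mul, Nat.cast_mul] at h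
  exact h

/-- On the unit sphere `Tr ρ = 1`. -/
theorem eval_trace_rhoP (z : Fin (d₁ * d₂) ⊕ Fin (d₁ * d₂) → ℂ)
    (hz : ∑ x, z (.inl x) * z (.inr x) = 1) :
    eval z (∑ a, rhoP a a : CoordPoly d₁ d₂) = 1 := by
  rw [← hz, ← finProdFinEquiv.sum_comp, Fintype.sum_prod_type]
  simp [rhoP, psi, chi]

theorem moment_tr2 : ((d₁ : ℂ) * d₂ + 1) * expect μ i tr2 = d₁ + d₂ := by
  have h := expect_contraction μ i coef2 1 fun a k => by rw [eul_coef2, Nat.cast_one]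
  rw [sum_coef2, div_coef2, Nat.cast_one] at h
  rw [h, expect_congr μ i (q := C ((d₁ : ℂ) + d₂))]
  · simp [expect]
  · intro z hz
    rw [eval_mul, eval_trace_rhoP z hz]
    simp

theorem moment_tr3 : ((d₁ : ℂ) * d₂ + 2) * expect μ i tr3 = (d₁ + d₂) * expect μ i tr2 + 1 := by
  have h := expect_contraction μ i coef3 2 fun a k => by rw [eul_coef3, Nat.cast_ofNat]
  rw [sum_coef3, div_coef3, Nat.cast_ofNat] at h
  rw [h, ← expect_C_mul μ i ((d₁ : ℂ) + d₂),
    show (1 : ℂ) = expect μ i (C 1) by simp [expect], ← expect_add μ i]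
  refine expect_congr μ i fun z hz => ?_
  rw [map_add, map_pow, eval_trace_rhoP z hz]
  simp

theorem moment_tr2_sq : ((d₁ : ℂ) * d₂ + 3) * expect μ i (tr2 * tr2) =
    (d₁ + d₂) * expect μ i tr2 + 2 * expect μ i tr3 := by
  have h := expect_contraction μ i (fun a k => coef2 a k * tr2) 3
    fun a k => by rw [eul_coef2_tr2, Nat.cast_ofNat]
  have hs : (∑ a, ∑ k, psi a k * (coef2 a k * tr2) : CoordPoly d₁ d₂) = tr2 * tr2 := by
    simp only [← mul_assoc, ← Finset.sum_mul, sum_coef2]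
  rw [hs, div_coef2_tr2, Nat.cast_ofNat] at h
  rw [h, ← expect_C_mul μ i ((d₁ : ℂ) + d₂), ← expect_C_mul μ i (2 : ℂ), ← expect_add μ i]
  refine expect_congr μ i fun z hz => ?_
  rw [map_add, eval_mul, eval_mul, eval_trace_rhoP z hz]
  simp

end moments

/-! ### Correlations between two columns -/

section columns
open MvPolynomial
variable {d₁ d₂ : ℕ}

/-- The overlap `Tr (ρ_i ρ_j)` as a function of the unitary. -/
noncomputable def overlap (i j : Fin (d₁ * d₂)) (U : Matrix.unitaryGroup (Fin (d₁ * d₂)) ℂ) : ℂ :=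
  Matrix.trace (rho U i * rho U j)

theorem continuous_overlap (i j : Fin (d₁ * d₂)) :
    Continuous (overlap (d₁ := d₁) (d₂ := d₂) i j) := by
  have h : ∀ i x, Continuous fun U : Matrix.unitaryGroup (Fin (d₁ * d₂)) ℂ => U.1 x i := fun i x =>
    Continuous.matrix_elem continuous_subtype_val x i
  have hrho : ∀ i, Continuous fun U : Matrix.unitaryGroup (Fin (d₁ * d₂)) ℂ => rho U i := fun i =>
    continuous_matrix fun a b => by
      simp only [rho, Matrix.of_apply]
      exact continuous_finsetSum _ fun k _ => (h i _).mul (Complex.continuous_conj.comp (h i _))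
  exact ((hrho i).mul (hrho j)).matrix_trace

theorem eval_rhoP (U : Matrix.unitaryGroup (Fin (d₁ * d₂)) ℂ) (i : Fin (d₁ * d₂)) (a b : Fin d₁) :
    eval (pt fun x => U.1 x i) (rhoP a b) = rho U i a b := by
  simp [rhoP, psi, chi, pt, rho]

theorem eval_tr2 (U : Matrix.unitaryGroup (Fin (d₁ * d₂)) ℂ) (i : Fin (d₁ * d₂)) :
    eval (pt fun x => U.1 x i) tr2 = overlap i i U := by
  simp only [tr2, map_sum, eval_mul, eval_rhoP, overlap, Matrix.trace, Matrix.diag_apply,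
    Matrix.mul_apply]

theorem trace_rho (U : Matrix.unitaryGroup (Fin (d₁ * d₂)) ℂ) (i : Fin (d₁ * d₂)) :
    Matrix.trace (rho U i) = 1 := by
  have hU := congrFun (congrFun (Matrix.UnitaryGroup.star_mul_self U) i) i
  rw [← eval_trace_rhoP (pt fun x => U.1 x i) (by
    simpa [Matrix.mul_apply, pt, mul_comm] using hU), map_sum]
  simp only [eval_rhoP, Matrix.trace, Matrix.diag_apply]

/-- The projectors onto the columns sum to the identity, whose partial trace is `d₂ • 1`. -/
theorem sum_rho (U : Matrix.unitaryGroup (Fin (d₁ * d₂)) ℂ) :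
    ∑ j, rho U j = (d₂ : ℂ) • (1 : Matrix (Fin d₁) (Fin d₁) ℂ) := by
  ext a b
  have hU : ∀ k : Fin d₂, ∑ j, U.1 (finProdFinEquiv (a, k)) j *
      (starRingEnd ℂ) (U.1 (finProdFinEquiv (b, k)) j) = (1 : Matrix (Fin d₁) (Fin d₁) ℂ) a b := by
    intro k
    have h := congrFun (congrFun (Matrix.mem_unitaryGroup_iff.mp U.2) (finProdFinEquiv (a, k)))
      (finProdFinEquiv (b, k))
    rw [Matrix.mul_apply] at h
    refine Eq.trans h ?_
    simp [Matrix.one_apply]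
  simp only [Matrix.sum_apply, rho, Matrix.of_apply]
  rw [Finset.sum_comm]
  simp only [hU]
  simp

theorem sum_overlap (U : Matrix.unitaryGroup (Fin (d₁ * d₂)) ℂ) (i : Fin (d₁ * d₂)) :
    ∑ j, overlap i j U = d₂ := by
  simp only [overlap, ← Matrix.trace_sum, ← Finset.mul_sum, sum_rho]
  simp [trace_rho]

variable (μ : Measure (Matrix.unitaryGroup (Fin (d₁ * d₂)) ℂ))
  [μ.IsHaarMeasure] [IsProbabilityMeasure μ]

theorem perm_mem {n : ℕ} (σ : Equiv.Perm (Fin n)) :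
    σ.permMatrix ℂ ∈ Matrix.unitaryGroup (Fin n) ℂ := by
  rw [Matrix.mem_unitaryGroup_iff, Matrix.star_eq_conjTranspose, Matrix.conjTranspose_permMatrix,
    ← Matrix.permMatrix_mul]
  simp

theorem rho_mul_perm (U : Matrix.unitaryGroup (Fin (d₁ * d₂)) ℂ)
    (σ : Equiv.Perm (Fin (d₁ * d₂))) (i : Fin (d₁ * d₂)) :
    rho (U * ⟨_, perm_mem σ⟩) i = rho U (σ.symm i) := by
  have h : ∀ x, (U * ⟨_, perm_mem σ⟩ : Matrix.unitaryGroup (Fin (d₁ * d₂)) ℂ).1 x i =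
      U.1 x (σ.symm i) := fun x =>
    congrFun (congrFun (PEquiv.mul_toMatrix_toPEquiv U.1 σ) x) i
  ext a b
  simp only [rho, Matrix.of_apply, h]

/-- Permuting columns preserves Haar measure, so the correlation of purity and overlap is the same
for every second column. -/
theorem integral_overlap_swap {i j k : Fin (d₁ * d₂)} (hj : i ≠ j) (hk : i ≠ k) :
    ∫ U, overlap i i U * overlap i j U ∂μ = ∫ U, overlap i i U * overlap i k U ∂μ := by
  have := compactU (n := d₁ * d₂)
  have := borelU (n := d₁ * d₂)
  have := rightU μ
  rw [← integral_mul_right_eq_self (μ := μ) (fun U => overlap i i U * overlap i j U)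
    ⟨_, perm_mem (Equiv.swap j k)⟩]
  simp only [overlap, rho_mul_perm, Equiv.symm_swap, Equiv.swap_apply_left,
    Equiv.swap_apply_of_ne_of_ne hj hk]

theorem overlap_relation {i j : Fin (d₁ * d₂)} (hj : i ≠ j) :
    ((d₁ : ℂ) * d₂ - 1) * ∫ U, overlap i i U * overlap i j U ∂μ =
      d₂ * expect μ i tr2 - expect μ i (tr2 * tr2) := by
  have hsum : ∑ k, ∫ U, overlap i i U * overlap i k U ∂μ = d₂ * expect μ i tr2 := by
    have hint : ∀ k, Integrable (fun U => overlap i i U * overlap i k U) μ := fun k =>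
      integrable_of_continuous μ ((continuous_overlap i i).mul (continuous_overlap i k))
    rw [← integral_finsetSum _ fun k _ => hint k]
    simp only [← Finset.mul_sum, sum_overlap, expect, eval_tr2]
    rw [integral_mul_const, mul_comm]
  have hii : expect μ i (tr2 * tr2) = ∫ U, overlap i i U * overlap i i U ∂μ := by
    simp only [expect, eval_mul, eval_tr2]
  rw [← hsum, hii, ← Finset.add_sum_erase _ _ (Finset.mem_univ i), add_sub_cancel_left,
    Finset.sum_congr rfl fun k hk =>
      integral_overlap_swap μ (Finset.ne_of_mem_erase hk).symm hj,
    Finset.sum_const, Finset.card_erase_of_mem (Finset.mem_univ i), Finset.card_univ,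
    Fintype.card_fin, nsmul_eq_mul, Nat.cast_sub (Nat.one_le_of_lt i.pos), Nat.cast_mul,
    Nat.cast_one]

end columns

/-- `E[Tr(ρ₀²) · Tr(ρ₀ρ₁)]` for a Haar-random unitary of size `d₁d₂ ≥ 2`. -/
theorem stmt3 (d₁ d₂ : ℕ) (hd₁ : 0 < d₁) (hd₂ : 0 < d₂) (hd : 2 ≤ d₁ * d₂)
    (μ : Measure (Matrix.unitaryGroup (Fin (d₁ * d₂)) ℂ))
    [μ.IsHaarMeasure] [IsProbabilityMeasure μ] :
    let i0 : Fin (d₁ * d₂) := ⟨0, by omega⟩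
    let i1 : Fin (d₁ * d₂) := ⟨1, by omega⟩
    ∫ U, Matrix.trace (rho U i0 * rho U i0) * Matrix.trace (rho U i0 * rho U i1) ∂μ =
      (((d₂ : ℂ) ^ 2 - 1) * ((d₁ : ℂ) * ((d₁ : ℂ) + (d₂ : ℂ)) * ((d₁ : ℂ) * (d₂ : ℂ) + 4) + 2)) / (((d₁ : ℂ) * (d₂ : ℂ) - 1) * ((d₁ : ℂ) * (d₂ : ℂ) + 1) * ((d₁ : ℂ) * (d₂ : ℂ) + 2) * ((d₁ : ℂ) * (d₂ : ℂ) + 3)) := by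
  intro i0 i1
  have h01 : i0 ≠ i1 := by simp [i0, i1]
  have hE := overlap_relation μ h01
  have h2 := moment_tr2 μ i0
  have h3 := moment_tr3 μ i0
  have h22 := moment_tr2_sq μ i0
  have n0 : (d₁ : ℂ) * d₂ - 1 ≠ 0 := by
    rw [sub_ne_zero]
    exact_mod_cast (by omega : d₁ * d₂ ≠ 1)
  have n1 : (d₁ : ℂ) * d₂ + 1 ≠ 0 := by exact_mod_cast Nat.succ_ne_zero (d₁ * d₂)
  have n2 : (d₁ : ℂ) * d₂ + 2 ≠ 0 := by exact_mod_cast Nat.succ_ne_zero (d₁ * d₂ + 1)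
  have n3 : (d₁ : ℂ) * d₂ + 3 ≠ 0 := by exact_mod_cast Nat.succ_ne_zero (d₁ * d₂ + 2)
  change ∫ U, overlap i0 i0 U * overlap i0 i1 U ∂μ = _
  rw [eq_div_iff (mul_ne_zero (mul_ne_zero (mul_ne_zero n0 n1) n2) n3)]
  generalize ∫ U, overlap i0 i0 U * overlap i0 i1 U ∂μ = E at *
  generalize expect μ i0 tr2 = t2 at *
  generalize expect μ i0 tr3 = t3 at *
  generalize expect μ i0 (tr2 * tr2) = t22 at *
  generalize (d₁ : ℂ) = x at *
  generalize (d₂ : ℂ) = y at *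
  -- eliminate `E`, then the quadratic, cubic and first moments of the purity, in this order
  linear_combination (x * y + 1) * (x * y + 2) * (x * y + 3) * hE
    - (x * y + 1) * (x * y + 2) * h22 - 2 * (x * y + 1) * h3
    + (y * (x * y + 2) * (x * y + 3) - (x + y) * (x * y + 2) - 2 * (x + y)) * h2
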